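/- Let Fₙ be the free group on γ₁,…,γₙ, let {r_l : l ∈ L} ⊂ Fₙ be a family of elements, and for α, β ∈ Fₙ set Θ(α,β) = [αβ] − [α] ∈ S_{Fₙ}. For k ≥ 0 let I_k ⊂ S_{Fₙ} be the ideal generated by all Θ(α, r_l) with l ∈ L and α ∈ Fₙ of word length at most k in the generators γᵢ^{±1}. Then I_{k+1} = I_k for all k ≥ 2; consequently the ideal generated by all Θ(α, r_l) with α ∈ Fₙ arbitrary and l ∈ L equals I₂. -/

import Mathlib

/-!
Write `t g` for the class `[g]`. As in the theory of `SL₂`-characters, `t` is a commuting,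
inversion-invariant, cyclic function, and `t x · t (αγ) = t (αxγ) + t (αx⁻¹γ)`. Hence, for a fixed
`r`, the function `f α = [αr] − [α]` satisfies `t x · f (αβ) = f (αxβ) + f (αx⁻¹β)`
(`skeinClass_mul_theta`): modulo an ideal containing `f (αβ)`, inverting a factor `x` of `αxβ`
changes the sign of `f`.

Suppose an ideal contains `f` of all words of length at most `k`, with `k ≥ 2`, and let `abc` have
length `k + 1`, with `a`, `b` letters. Modulo the ideal, each of `a`, `b`, `c` may be inverted at
the cost of a sign. Inverting the block `ab` as a whole gives `f (abc) ≡ -f (b⁻¹a⁻¹c) ≡ -f (bac)`,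
so `f` is antisymmetric under transpositions of neighbouring factors and `f (cba) ≡ -f (abc)`
(`theta_add_theta_swap_left`, `theta_add_theta_swap_right`). Inverting the whole word gives
`f (abc) ≡ -f (c⁻¹b⁻¹a⁻¹) ≡ f (cba)`. Together, `2 f (abc) ≡ 0`, and `2` is invertible in `ℂ`.
-/

noncomputable section

/-- The element of the tensor algebra `T(ℂG)` corresponding to a group element `g ∈ G`. -/
def skeinGen (G : Type) [Group G] (g : G) : TensorAlgebra ℂ (MonoidAlgebra ℂ G) :=
  TensorAlgebra.ι ℂ (MonoidAlgebra.of ℂ G g)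

/-- The defining relations of the skein algebra of a group `G`: `e = 2`,
`α ⊗ β = β ⊗ α` and `α ⊗ β = αβ + αβ⁻¹` for all `α, β ∈ G`. -/
inductive SkeinRel (G : Type) [Group G] :
    TensorAlgebra ℂ (MonoidAlgebra ℂ G) → TensorAlgebra ℂ (MonoidAlgebra ℂ G) → Prop
  | unit : SkeinRel G (skeinGen G 1) 2
  | comm (a b : G) : SkeinRel G (skeinGen G a * skeinGen G b) (skeinGen G b * skeinGen G a)
  | mul (a b : G) : SkeinRel G (skeinGen G a * skeinGen G b)
      (skeinGen G (a * b) + skeinGen G (a * b⁻¹))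

/-- The skein algebra `S_G` of a group `G`. -/
abbrev SkeinAlgebra (G : Type) [Group G] := RingQuot (SkeinRel G)

/-- The class `[g] ∈ S_G` of a group element `g ∈ G`. -/
def skeinClass (G : Type) [Group G] (g : G) : SkeinAlgebra G :=
  RingQuot.mkAlgHom ℂ (SkeinRel G) (skeinGen G g)

/-- `Θ(α, β) = [αβ] − [α] ∈ S_{Fₙ}`. -/
def theta (n : ℕ) (α β : FreeGroup (Fin n)) : SkeinAlgebra (FreeGroup (Fin n)) :=
  skeinClass (FreeGroup (Fin n)) (α * β) - skeinClass (FreeGroup (Fin n)) α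

/-- `I_k`: the ideal of `S_{Fₙ}` generated by the elements `Θ(α, r_l)` with `l ∈ L` and
`α ∈ Fₙ` of word length at most `k`. -/
def thetaIdeal (n : ℕ) (L : Type) (r : L → FreeGroup (Fin n)) (k : ℕ) :
    TwoSidedIdeal (SkeinAlgebra (FreeGroup (Fin n))) :=
  TwoSidedIdeal.span {x | ∃ l : L, ∃ α : FreeGroup (Fin n),
    FreeGroup.norm α ≤ k ∧ x = theta n α (r l)}

section

variable {G : Type} [Group G]

theorem skeinClass_one : skeinClass G 1 = 2 := by
  have h := RingQuot.mkAlgHom_rel ℂ (SkeinRel.unit (G := G))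
  rwa [map_ofNat] at h

theorem skeinClass_comm (a b : G) :
    skeinClass G a * skeinClass G b = skeinClass G b * skeinClass G a := by
  have h := RingQuot.mkAlgHom_rel ℂ (SkeinRel.comm a b)
  simpa [skeinClass] using h

theorem skeinClass_mul (a b : G) :
    skeinClass G a * skeinClass G b = skeinClass G (a * b) + skeinClass G (a * b⁻¹) := by
  have h := RingQuot.mkAlgHom_rel ℂ (SkeinRel.mul a b)
  simpa [skeinClass] using h

theorem skeinClass_inv (a : G) : skeinClass G a⁻¹ = skeinClass G a := by
  have h := skeinClass_mul 1 a
  rw [skeinClass_one, one_mul, one_mul, two_mul] at h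
  exact (add_left_cancel h).symm

theorem skeinClass_cyclic (a b : G) : skeinClass G (a * b) = skeinClass G (b * a) := by
  have h := skeinClass_comm a b
  rw [skeinClass_mul, skeinClass_mul, ← skeinClass_inv (a * b⁻¹)] at h
  simpa using h

/-- The defining product formula with a factor inserted in the middle of a product; it reflects the
fact that `x + x⁻¹` is the scalar `tr x` for `x ∈ SL₂`. -/
theorem skeinClass_mul_insert (x α γ : G) :
    skeinClass G x * skeinClass G (α * γ) =
      skeinClass G (α * x * γ) + skeinClass G (α * x⁻¹ * γ) := by
  rw [skeinClass_comm, skeinClass_cyclic α γ, skeinClass_mul, skeinClass_cyclic (α * x) γ,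
    skeinClass_cyclic (α * x⁻¹) γ, mul_assoc, mul_assoc]

end

section

variable {n : ℕ} {r : FreeGroup (Fin n)}

theorem skeinClass_mul_theta (x α β : FreeGroup (Fin n)) :
    skeinClass _ x * theta n (α * β) r = theta n (α * x * β) r + theta n (α * x⁻¹ * β) r := by
  have h := skeinClass_mul_insert x α (β * r)
  simp only [← mul_assoc] at h
  rw [theta, theta, theta, mul_sub, h, skeinClass_mul_insert]
  abel

variable {I : TwoSidedIdeal (SkeinAlgebra (FreeGroup (Fin n)))}

/-- Modulo an ideal containing `Θ(αβ, r)`, inverting the factor `x` of `αxβ` changes the sign of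
`Θ(αxβ, r)`. -/
theorem theta_add_theta_inv_mem {α β : FreeGroup (Fin n)} (x : FreeGroup (Fin n))
    (h : theta n (α * β) r ∈ I) :
    theta n (α * x * β) r + theta n (α * x⁻¹ * β) r ∈ I := by
  rw [← skeinClass_mul_theta]
  exact I.mul_mem_left _ _ h

/-- Two congruences of the form `x ≡ -y ≡ z` extended by a third one `z ≡ -w`. -/
theorem add_mem_of_chain {x y z w : SkeinAlgebra (FreeGroup (Fin n))} (h₁ : x + y ∈ I)
    (h₂ : y + z ∈ I) (h₃ : z + w ∈ I) : x + w ∈ I := by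
  have h := I.add_mem (I.sub_mem h₁ h₂) h₃
  have e : x + y - (y + z) + (z + w) = x + w := by abel
  rwa [e] at h

variable {k : ℕ} {a b c : FreeGroup (Fin n)}

theorem theta_add_theta_swap_left
    (hI : ∀ α : FreeGroup (Fin n), α.norm ≤ k → theta n α r ∈ I)
    (hac : a.norm + c.norm ≤ k) (hbc : b.norm + c.norm ≤ k) :
    theta n (a * b * c) r + theta n (b * a * c) r ∈ I := by
  have h₁ : theta n (a * b * c) r + theta n (b⁻¹ * a⁻¹ * c) r ∈ I := by
    have h := theta_add_theta_inv_mem (r := r) (I := I) (α := 1) (β := c) (a * b)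
      (hI _ (by rw [one_mul]; lia))
    simpa using h
  have h₂ : theta n (b⁻¹ * a⁻¹ * c) r + theta n (b * a⁻¹ * c) r ∈ I := by
    have h := theta_add_theta_inv_mem (r := r) (I := I) (α := 1) (β := a⁻¹ * c) b⁻¹
      (hI _ (by
        have := FreeGroup.norm_mul_le a⁻¹ c
        rw [FreeGroup.norm_inv_eq] at this
        rw [one_mul]; lia))
    simpa [mul_assoc] using h
  have h₃ : theta n (b * a⁻¹ * c) r + theta n (b * a * c) r ∈ I := by
    have h := theta_add_theta_inv_mem (r := r) (I := I) (α := b) (β := c) a⁻¹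
      (hI _ ((FreeGroup.norm_mul_le _ _).trans hbc))
    simpa using h
  exact add_mem_of_chain h₁ h₂ h₃

theorem theta_add_theta_swap_right
    (hI : ∀ α : FreeGroup (Fin n), α.norm ≤ k → theta n α r ∈ I)
    (hab : a.norm + b.norm ≤ k) (hac : a.norm + c.norm ≤ k) :
    theta n (a * b * c) r + theta n (a * c * b) r ∈ I := by
  have h₁ : theta n (a * b * c) r + theta n (a * c⁻¹ * b⁻¹) r ∈ I := by
    have h := theta_add_theta_inv_mem (r := r) (I := I) (α := a) (β := 1) (b * c)
      (hI _ (by rw [mul_one]; lia))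
    simpa [mul_assoc] using h
  have h₂ : theta n (a * c⁻¹ * b⁻¹) r + theta n (a * c⁻¹ * b) r ∈ I := by
    have h := theta_add_theta_inv_mem (r := r) (I := I) (α := a * c⁻¹) (β := 1) b⁻¹
      (hI _ (by
        have := FreeGroup.norm_mul_le a c⁻¹
        rw [FreeGroup.norm_inv_eq] at this
        rw [mul_one]; lia))
    simpa using h
  have h₃ : theta n (a * c⁻¹ * b) r + theta n (a * c * b) r ∈ I := by
    have h := theta_add_theta_inv_mem (r := r) (I := I) (α := a) (β := b) c⁻¹
      (hI _ ((FreeGroup.norm_mul_le _ _).trans hab))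
    simpa using h
  exact add_mem_of_chain h₁ h₂ h₃

theorem theta_mul_mul_mem
    (hI : ∀ α : FreeGroup (Fin n), α.norm ≤ k → theta n α r ∈ I)
    (hab : a.norm + b.norm ≤ k) (hac : a.norm + c.norm ≤ k)
    (hbc : b.norm + c.norm ≤ k) : theta n (a * b * c) r ∈ I := by
  -- `cba` is an odd permutation of `abc`.
  have odd : theta n (a * b * c) r + theta n (c * b * a) r ∈ I :=
    add_mem_of_chain (theta_add_theta_swap_left hI hac hbc)
      (theta_add_theta_swap_right hI (by lia) hbc)
      (theta_add_theta_swap_left hI (by lia) (by lia))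
  have inv : theta n (a * b * c) r + theta n (c⁻¹ * b⁻¹ * a⁻¹) r ∈ I := by
    have h := theta_add_theta_inv_mem (r := r) (I := I) (α := 1) (β := 1) (a * b * c)
      (hI _ (by simp))
    simpa [mul_assoc] using h
  have flip : theta n (c⁻¹ * b⁻¹ * a⁻¹) r + theta n (c * b * a) r ∈ I := by
    have h₁ : theta n (c⁻¹ * b⁻¹ * a⁻¹) r + theta n (c * b⁻¹ * a⁻¹) r ∈ I := by
      have h := theta_add_theta_inv_mem (r := r) (I := I) (α := 1) (β := b⁻¹ * a⁻¹) c⁻¹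
        (hI _ (by
          have := FreeGroup.norm_mul_le b⁻¹ a⁻¹
          rw [FreeGroup.norm_inv_eq, FreeGroup.norm_inv_eq] at this
          rw [one_mul]; lia))
      simpa [mul_assoc] using h
    have h₂ : theta n (c * b⁻¹ * a⁻¹) r + theta n (c * b * a⁻¹) r ∈ I := by
      have h := theta_add_theta_inv_mem (r := r) (I := I) (α := c) (β := a⁻¹) b⁻¹
        (hI _ (by
          have := FreeGroup.norm_mul_le c a⁻¹
          rw [FreeGroup.norm_inv_eq] at this
          lia))
      simpa using h
    have h₃ : theta n (c * b * a⁻¹) r + theta n (c * b * a) r ∈ I := by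
      have h := theta_add_theta_inv_mem (r := r) (I := I) (α := c * b) (β := 1) a⁻¹
        (hI _ (by
          have := FreeGroup.norm_mul_le c b
          rw [mul_one]; lia))
      simpa using h
    exact add_mem_of_chain h₁ h₂ h₃
  have two := I.add_mem (I.sub_mem inv flip) odd
  have h := I.mul_mem_left (algebraMap ℂ _ (1 / 2)) _ two
  have e : ∀ x y z : SkeinAlgebra (FreeGroup (Fin n)),
      algebraMap ℂ _ (1 / 2) * (x + y - (y + z) + (x + z)) = x := by
    intro x y z
    have e' : x + y - (y + z) + (x + z) = (2 : ℂ) • x := by rw [two_smul]; abel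
    rw [e', ← Algebra.smul_def, smul_smul]
    norm_num
  rwa [e] at h

theorem theta_mem_of_norm_le_succ
    (hI : ∀ α : FreeGroup (Fin n), α.norm ≤ k → theta n α r ∈ I)
    (hk : 2 ≤ k) {α : FreeGroup (Fin n)} (hα : α.norm ≤ k + 1) :
    theta n α r ∈ I := by
  obtain hle | hlt := le_or_gt α.norm k
  · exact hI α hle
  obtain ⟨x, y, l, hl⟩ : ∃ x y l, α.toWord = x :: y :: l := by
    rw [FreeGroup.norm] at hlt
    match h : α.toWord with
    | [] => simp [h] at hlt
    | [_] => simp [h] at hlt; lia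
    | x :: y :: l => exact ⟨x, y, l, rfl⟩
  have e : α = FreeGroup.mk [x] * FreeGroup.mk [y] * FreeGroup.mk l := by
    rw [FreeGroup.mul_mk, FreeGroup.mul_mk, ← FreeGroup.mk_toWord (x := α), hl]
    rfl
  have hlen : l.length + 2 ≤ k + 1 := by
    rw [FreeGroup.norm, hl] at hα
    simpa using hα
  have hx : (FreeGroup.mk [x]).norm ≤ 1 := FreeGroup.norm_mk_le
  have hy : (FreeGroup.mk [y]).norm ≤ 1 := FreeGroup.norm_mk_le
  have hl' : (FreeGroup.mk l).norm ≤ l.length := FreeGroup.norm_mk_le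
  rw [e]
  exact theta_mul_mul_mem hI (by lia) (by lia) (by lia)

end

theorem theta_mem_thetaIdeal {n : ℕ} {L : Type} {r : L → FreeGroup (Fin n)} {k : ℕ} (l : L)
    {α : FreeGroup (Fin n)} (hα : α.norm ≤ k) : theta n α (r l) ∈ thetaIdeal n L r k :=
  TwoSidedIdeal.subset_span ⟨l, α, hα, rfl⟩

/-- Let `{r_l : l ∈ L} ⊆ Fₙ` and let `I_k ⊆ S_{Fₙ}` be the ideal generated by all
`Θ(α, r_l) = [α r_l] − [α]` with `l ∈ L` and `α` of word length at most `k`.  Then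
`I_{k+1} = I_k` for all `k ≥ 2`; consequently the ideal generated by all the `Θ(α, r_l)`
with `α ∈ Fₙ` arbitrary equals `I₂`. -/
theorem thetaIdeal_stabilizes (n : ℕ) (L : Type) (r : L → FreeGroup (Fin n)) :
    (∀ k : ℕ, 2 ≤ k → thetaIdeal n L r (k + 1) = thetaIdeal n L r k) ∧
      TwoSidedIdeal.span {x | ∃ l : L, ∃ α : FreeGroup (Fin n), x = theta n α (r l)} =
        thetaIdeal n L r 2 := by
  constructor
  · intro k hk
    apply le_antisymm
    · refine TwoSidedIdeal.span_le.2 ?_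
      rintro _ ⟨l, α, hα, rfl⟩
      exact theta_mem_of_norm_le_succ (fun _ h => theta_mem_thetaIdeal l h) hk hα
    · refine TwoSidedIdeal.span_mono ?_
      rintro _ ⟨l, α, hα, rfl⟩
      exact ⟨l, α, by lia, rfl⟩
  · apply le_antisymm
    · refine TwoSidedIdeal.span_le.2 ?_
      rintro _ ⟨l, α, rfl⟩
      have key : ∀ m : ℕ, ∀ β : FreeGroup (Fin n), β.norm ≤ m + 2 →
          theta n β (r l) ∈ thetaIdeal n L r 2 := by
        intro m
        induction m with
        | zero => exact fun β hβ => theta_mem_thetaIdeal l hβ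
        | succ m ih =>
          intro β hβ
          exact theta_mem_of_norm_le_succ ih (by lia) (by lia)
      exact key α.norm α (by lia)
    · refine TwoSidedIdeal.span_mono ?_
      rintro _ ⟨l, α, -, rfl⟩
      exact ⟨l, α, rfl⟩

end
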